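/- Let n ≥ 2 and let G be a real symmetric n×n matrix which is indecomposable, has G i i = 1 for every i, and G i j ≤ 0 for all i ≠ j. Then for every nonempty proper subset S of the index set, the smallest eigenvalue of the principal submatrix G_S (rows and columns restricted to S) is strictly greater than the smallest eigenvalue of G. -/

import Mathlib

/-- A real square matrix indexed by `ι` is *indecomposable* if there is no subset `S` of `ι`
with `S` nonempty and `S ≠ univ` such that `M i j = 0` whenever `i ∈ S` and `j ∉ S`. -/
def Matrix.Indecomposable {ι : Type*} (M : Matrix ι ι ℝ) : Prop :=
  ¬ ∃ S : Set ι, S.Nonempty ∧ S ≠ Set.univ ∧ ∀ i ∈ S, ∀ j ∉ S, M i j = 0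

/-!
Suppose an eigenvalue `μ` of the proper principal submatrix were at most the least eigenvalue `c`
of `G`. Extend its eigenvector by zero and take absolute values: since the off-diagonal entries are
nonpositive, this does not increase the quadratic form, so the resulting vector has Rayleigh
quotient at most `c` and is an eigenvector of `G` for `c`. A nonnegative eigenvector of an
indecomposable matrix with nonpositive off-diagonal entries is strictly positive, yet this one
vanishes off the principal block.
-/

open Function Matrix

section Spectrum

variable {K n : Type*} [Field K] [Fintype n] [DecidableEq n]

theorem spectrum_eq_setOf_mulVec_eq_smul (A : Matrix n n K) :
    spectrum K A = {t | ∃ w : n → K, w ≠ 0 ∧ A *ᵥ w = t • w} := by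
  ext t
  rw [← spectrum_toLin', ← Module.End.hasEigenvalue_iff_mem_spectrum,
    Module.End.hasEigenvalue_iff, Submodule.ne_bot_iff]
  simp only [Module.End.mem_eigenspace_iff, toLin'_apply, Set.mem_ofPred_eq, and_comm]

end Spectrum

section RayleighQuotient

variable {𝕜 n : Type*} [RCLike 𝕜] [Fintype n] [DecidableEq n] {A : Matrix n n 𝕜} {c : ℝ}

open scoped MatrixOrder ComplexOrder

theorem posSemidef_sub_algebraMap (hA : A.IsHermitian) (hc : c ∈ lowerBounds (spectrum ℝ A)) :
    (A - algebraMap ℝ (Matrix n n 𝕜) c).PosSemidef :=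
  Matrix.le_iff.mp <| (algebraMap_le_iff_le_spectrum (ha := hA.isSelfAdjoint)).mpr fun _ ht ↦ hc ht

theorem mulVec_eq_smul_of_dotProduct_mulVec_le (hA : A.IsHermitian)
    (hc : c ∈ lowerBounds (spectrum ℝ A)) {x : n → 𝕜}
    (hx : star x ⬝ᵥ A *ᵥ x ≤ c • (star x ⬝ᵥ x)) : A *ᵥ x = c • x := by
  have hpsd := posSemidef_sub_algebraMap hA hc
  have sub_mulVec_eq : (A - algebraMap ℝ (Matrix n n 𝕜) c) *ᵥ x = A *ᵥ x - c • x := by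
    rw [sub_mulVec, Algebra.algebraMap_eq_smul_one, smul_mulVec, one_mulVec]
  have form_nonpos : star x ⬝ᵥ (A - algebraMap ℝ (Matrix n n 𝕜) c) *ᵥ x ≤ 0 := by
    rwa [sub_mulVec_eq, dotProduct_sub, dotProduct_smul, sub_nonpos]
  rw [← sub_eq_zero, ← sub_mulVec_eq, ← hpsd.dotProduct_mulVec_zero_iff]
  exact form_nonpos.antisymm (hpsd.dotProduct_mulVec_nonneg x)

end RayleighQuotient

section ExtendByZero

variable {l m n R : Type*} [Fintype m] [Fintype n] [NonUnitalNonAssocSemiring R] {f : m → n}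

theorem extend_zero_dotProduct (hf : Injective f) (w : m → R) (x : n → R) :
    extend f w 0 ⬝ᵥ x = w ⬝ᵥ x ∘ f := by
  refine (Fintype.sum_of_injective f hf _ _ (fun i hi ↦ ?_) fun k ↦ ?_).symm
  · rw [extend_apply' _ _ _ hi, Pi.zero_apply, zero_mul]
  · rw [hf.extend_apply, Function.comp_apply]

theorem mulVec_extend_zero (hf : Injective f) (A : Matrix l n R) (w : m → R) :
    A *ᵥ extend f w 0 = A.submatrix id f *ᵥ w := by
  ext i
  refine (Fintype.sum_of_injective f hf _ _ (fun j hj ↦ ?_) fun k ↦ ?_).symm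
  · rw [extend_apply' _ _ _ hj, Pi.zero_apply, mul_zero]
  · rw [hf.extend_apply]
    rfl

theorem extend_zero_dotProduct_mulVec_extend_zero (hf : Injective f) (A : Matrix n n R)
    (w : m → R) : extend f w 0 ⬝ᵥ A *ᵥ extend f w 0 = w ⬝ᵥ A.submatrix f f *ᵥ w := by
  rw [extend_zero_dotProduct hf, mulVec_extend_zero hf]
  rfl

end ExtendByZero

theorem abs_dotProduct_abs {n R : Type*} [Fintype n] [Ring R] [LinearOrder R] (u : n → R) :
    |u| ⬝ᵥ |u| = u ⬝ᵥ u :=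
  Finset.sum_congr rfl fun i _ ↦ abs_mul_abs_self (u i)

theorem abs_dotProduct_mulVec_abs_le {n R : Type*} [Fintype n] [CommRing R] [LinearOrder R]
    [IsOrderedRing R] {A : Matrix n n R} (hoff : ∀ i j, i ≠ j → A i j ≤ 0) (u : n → R) :
    |u| ⬝ᵥ A *ᵥ |u| ≤ u ⬝ᵥ A *ᵥ u := by
  simp only [dotProduct, mulVec, Finset.mul_sum, Pi.abs_apply, mul_left_comm _ (A _ _)]
  refine Finset.sum_le_sum fun i _ ↦ Finset.sum_le_sum fun j _ ↦ ?_
  rcases eq_or_ne i j with rfl | hij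
  · rw [abs_mul_abs_self]
  · have le_abs_mul_abs : u i * u j ≤ |u i| * |u j| := abs_mul (u i) (u j) ▸ le_abs_self _
    exact mul_le_mul_of_nonpos_left le_abs_mul_abs (hoff i j hij)

theorem pos_of_indecomposable_of_mulVec_nonneg {ι : Type*} [Fintype ι] {A : Matrix ι ι ℝ}
    (hind : A.Indecomposable) (hoff : ∀ i j, i ≠ j → A i j ≤ 0) {v : ι → ℝ} (hv : 0 ≤ v)
    (hv0 : v ≠ 0) (hAv : ∀ i, v i = 0 → 0 ≤ (A *ᵥ v) i) (i : ι) : 0 < v i := by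
  refine (hv i).lt_of_ne' fun hi ↦ hind ⟨{j | v j = 0}, ⟨i, hi⟩, ?_, ?_⟩
  · exact fun h ↦ hv0 <| funext <| Set.eq_univ_iff_forall.mp h
  · intro j (hj : v j = 0) k hk
    have term_nonpos : ∀ l ∈ Finset.univ, A j l * v l ≤ 0 := by
      intro l _
      rcases eq_or_ne j l with rfl | hjl
      · rw [hj, mul_zero]
      · exact mul_nonpos_of_nonpos_of_nonneg (hoff j l hjl) (hv l)
    have row_eq_zero : ∑ l, A j l * v l = 0 := (Finset.sum_nonpos term_nonpos).antisymm (hAv j hj)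
    have term_eq_zero : A j k * v k = 0 :=
      (Finset.sum_eq_zero_iff_of_nonpos term_nonpos).mp row_eq_zero k (Finset.mem_univ k)
    exact (mul_eq_zero.mp term_eq_zero).resolve_right hk

theorem smallest_eigenvalue_strict_mono_general {ι κ : Type*} [Fintype ι] [DecidableEq ι]
    [Fintype κ] [DecidableEq κ] {G : Matrix ι ι ℝ} (hsym : G.IsSymm) (hind : G.Indecomposable)
    (hoff : ∀ i j, i ≠ j → G i j ≤ 0) {f : κ → ι} (hf : Injective f) (hf' : ¬ Surjective f)
    {c μ : ℝ} (hc : c ∈ lowerBounds (spectrum ℝ G)) (hμ : μ ∈ spectrum ℝ (G.submatrix f f)) :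
    c < μ := by
  rw [spectrum_eq_setOf_mulVec_eq_smul] at hμ
  obtain ⟨w, hw0, hw⟩ := hμ
  by_contra! hμc
  set u : ι → ℝ := extend f w 0
  have abs_u_ne_zero : |u| ≠ 0 := by
    obtain ⟨k, hk⟩ := Function.ne_iff.mp hw0
    exact Function.ne_iff.mpr ⟨f k, by simpa [u, hf.extend_apply] using hk⟩
  have rayleigh_le : |u| ⬝ᵥ G *ᵥ |u| ≤ c • (|u| ⬝ᵥ |u|) := calc
    |u| ⬝ᵥ G *ᵥ |u| ≤ u ⬝ᵥ G *ᵥ u := abs_dotProduct_mulVec_abs_le hoff u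
    _ = μ • (w ⬝ᵥ w) := by
      rw [extend_zero_dotProduct_mulVec_extend_zero hf, hw, dotProduct_smul]
    _ = μ • (u ⬝ᵥ u) := by rw [extend_zero_dotProduct hf, extend_comp hf]
    _ ≤ c • (|u| ⬝ᵥ |u|) := by
      rw [abs_dotProduct_abs]
      exact smul_le_smul_of_nonneg_right hμc (dotProduct_star_self_nonneg u)
  have eigen : G *ᵥ |u| = c • |u| :=
    mulVec_eq_smul_of_dotProduct_mulVec_le (isHermitian_iff_isSymm.mpr hsym) hc rayleigh_le
  obtain ⟨i, hi⟩ := not_forall.mp hf'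
  have abs_u_pos : 0 < |u| i :=
    pos_of_indecomposable_of_mulVec_nonneg hind hoff (abs_nonneg u) abs_u_ne_zero
      (fun j hj ↦ by rw [eigen, Pi.smul_apply, hj, smul_zero]) i
  have u_eq_zero : u i = 0 := extend_apply' w (0 : ι → ℝ) i hi
  exact abs_u_pos.ne' (abs_eq_zero.mpr u_eq_zero)

/-- For an indecomposable symmetric matrix with unit diagonal and nonpositive off-diagonal
entries, the smallest eigenvalue of every proper principal submatrix is strictly greater
than the smallest eigenvalue of the matrix itself. -/
theorem smallest_eigenvalue_strict_mono (n : ℕ) (hn : 2 ≤ n)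
    (G : Matrix (Fin n) (Fin n) ℝ) (hsym : G.IsSymm) (hind : G.Indecomposable)
    (hdiag : ∀ i, G i i = 1) (hoff : ∀ i j, i ≠ j → G i j ≤ 0)
    (S : Finset (Fin n)) (hS : S.Nonempty) (hSne : S ≠ Finset.univ)
    (lam mu : ℝ)
    (hlam : IsLeast {t : ℝ | ∃ w : Fin n → ℝ, w ≠ 0 ∧ G.mulVec w = t • w} lam)
    (hmu : IsLeast {t : ℝ | ∃ w : {i // i ∈ S} → ℝ, w ≠ 0 ∧
      (G.submatrix (fun i : {i // i ∈ S} => (i : Fin n))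
        (fun i : {i // i ∈ S} => (i : Fin n))).mulVec w = t • w} mu) :
    lam < mu := by
  rw [← spectrum_eq_setOf_mulVec_eq_smul] at hlam hmu
  exact smallest_eigenvalue_strict_mono_general hsym hind hoff Subtype.val_injective
    (by simpa [Surjective, Finset.eq_univ_iff_forall] using hSne) hlam.2 hmu.1
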